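/- arXiv:1609.09378 — 2 statements merged into one kernel-verified Lean document; each statement's English description precedes it below -/
import Mathlib

section
/- Let f : V → [0,∞] be a lower semicontinuous function on a separable real Hilbert space V. Then: (i) for each fixed x ∈ V, the map γ ↦ S_γ²(f)(x) is non-decreasing on (0,∞); (ii) for every x ∈ V, lim_{γ→∞} S_γ²(f)(x) = f(x); (iii) the pointwise limit g(x) := lim_{γ→0⁺} S_γ²(f)(x) exists, g is convex, and CE(f) ≤ g ≤ f pointwise, where CE(f) denotes the lower semicontinuous convex envelope of f. -/
open scoped InnerProductSpace RealInnerProductSpace ENNReal Topology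
open Filter

noncomputable section

/-- The S-transform `S_γ(f)(y) = sup_x ( -f(x) - (γ/2)‖x-y‖² )` for
extended-real-valued functions on a real inner product space. -/
def SgammaE {V : Type*} [NormedAddCommGroup V] [InnerProductSpace ℝ V]
    (γ : ℝ) (f : V → EReal) (y : V) : EReal :=
  ⨆ x : V, (-(f x) - (((γ / 2) * ‖x - y‖ ^ 2 : ℝ) : EReal))

/-- The S-transform of a `[0,∞]`-valued function. -/
def Sgamma {V : Type*} [NormedAddCommGroup V] [InnerProductSpace ℝ V]
    (γ : ℝ) (f : V → ℝ≥0∞) (y : V) : EReal :=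
  SgammaE γ (fun x => (f x : EReal)) y

/-- The twice iterated S-transform `S_γ²(f) = S_γ(S_γ(f))`. -/
def Sgamma2 {V : Type*} [NormedAddCommGroup V] [InnerProductSpace ℝ V]
    (γ : ℝ) (f : V → ℝ≥0∞) : V → EReal :=
  SgammaE γ (Sgamma γ f)

/-- Convexity for extended-real-valued functions. -/
def EConvexOn {V : Type*} [NormedAddCommGroup V] [InnerProductSpace ℝ V]
    (h : V → EReal) : Prop :=
  ∀ x y : V, ∀ a b : ℝ, 0 ≤ a → 0 ≤ b → a + b = 1 →
    h (a • x + b • y) ≤ (a : EReal) * h x + (b : EReal) * h y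

section QuadraticMinorants

variable {V : Type*} [NormedAddCommGroup V] [InnerProductSpace ℝ V]

/-- The concave quadratic with value `a`, gradient `v` and Hessian `-γ` at `x` lies below `f`. -/
def IsQuadMinorant (γ : ℝ) (f : V → ℝ≥0∞) (x : V) (a : ℝ) (v : V) : Prop :=
  ∀ z : V, ((a + ⟪v, z - x⟫_ℝ - γ / 2 * ‖z - x‖ ^ 2 : ℝ) : EReal) ≤ (f z : EReal)

theorem neg_sub_coe_le_neg_coe_iff (e : EReal) (q c : ℝ) :
    -e - (q : EReal) ≤ ((-c : ℝ) : EReal) ↔ ((c - q : ℝ) : EReal) ≤ e := by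
  induction e with
  | bot => simp [sub_eq_add_neg, ← EReal.coe_neg]
  | coe r =>
    norm_cast
    constructor <;> intro h <;> linarith
  | top => simp [sub_eq_add_neg]

/-- Expanding the square centred at `x + γ⁻¹ v` around `x`. -/
theorem half_mul_norm_sub_add_inv_smul_sq {γ : ℝ} (hγ : 0 < γ) (x v z : V) :
    γ / 2 * ‖z - (x + γ⁻¹ • v)‖ ^ 2 =
      γ / 2 * ‖z - x‖ ^ 2 - ⟪v, z - x⟫_ℝ + γ / 2 * ‖(x + γ⁻¹ • v) - x‖ ^ 2 := by
  rw [← sub_sub, norm_sub_sq_real, real_inner_smul_right, real_inner_comm, add_sub_cancel_left]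
  field_simp

theorem sgamma_le_neg_coe_iff {γ : ℝ} (f : V → ℝ≥0∞) (y : V) (c : ℝ) :
    Sgamma γ f y ≤ ((-c : ℝ) : EReal) ↔
      ∀ z, ((c - γ / 2 * ‖z - y‖ ^ 2 : ℝ) : EReal) ≤ (f z : EReal) := by
  simp only [Sgamma, SgammaE, iSup_le_iff, neg_sub_coe_le_neg_coe_iff]

theorem IsQuadMinorant.le_sgamma2 {γ : ℝ} (hγ : 0 < γ) {f : V → ℝ≥0∞} {x : V} {a : ℝ} {v : V}
    (h : IsQuadMinorant γ f x a v) : (a : EReal) ≤ Sgamma2 γ f x := by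
  set y := x + γ⁻¹ • v with hy
  set K := γ / 2 * ‖y - x‖ ^ 2 with hK
  have hS : Sgamma γ f y ≤ ((-(a + K) : ℝ) : EReal) := by
    refine (sgamma_le_neg_coe_iff f y (a + K)).2 fun z => ?_
    convert h z using 2
    rw [hy, half_mul_norm_sub_add_inv_smul_sq hγ, ← hy, ← hK]
    ring
  calc (a : EReal) = -((-(a + K) : ℝ) : EReal) - (K : EReal) := by
        norm_cast
        ring
    _ ≤ -(Sgamma γ f y) - (K : EReal) := EReal.sub_le_sub (EReal.neg_le_neg_iff.2 hS) le_rfl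
    _ ≤ Sgamma2 γ f x :=
        le_iSup (fun y => -(Sgamma γ f y) - ((γ / 2 * ‖y - x‖ ^ 2 : ℝ) : EReal)) y

theorem exists_isQuadMinorant_of_lt_sgamma2 {γ : ℝ} (hγ : 0 < γ) {f : V → ℝ≥0∞} {x : V} {a : ℝ}
    (h : (a : EReal) < Sgamma2 γ f x) : ∃ v, IsQuadMinorant γ f x a v := by
  obtain ⟨y, hy⟩ := lt_iSup_iff.1 h
  have hS : Sgamma γ f y ≤ ((-(a + γ / 2 * ‖y - x‖ ^ 2) : ℝ) : EReal) := by
    have := EReal.add_lt_of_lt_sub hy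
    rw [EReal.coe_neg, EReal.coe_add]
    exact (EReal.lt_neg_comm.1 this).le
  refine ⟨γ • (y - x), fun z => ?_⟩
  convert (sgamma_le_neg_coe_iff f y _).1 hS z using 2
  have := half_mul_norm_sub_add_inv_smul_sq hγ x (γ • (y - x)) z
  rw [inv_smul_smul₀ hγ.ne', add_sub_cancel] at this
  rw [this]
  ring

theorem IsQuadMinorant.mono {γ₁ γ₂ : ℝ} (hle : γ₂ ≤ γ₁) {f : V → ℝ≥0∞} {x : V} {a : ℝ} {v : V}
    (h : IsQuadMinorant γ₂ f x a v) : IsQuadMinorant γ₁ f x a v := fun z =>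
  (EReal.coe_le_coe_iff.2 (by gcongr)).trans (h z)

theorem IsQuadMinorant.recenter {γ : ℝ} {f : V → ℝ≥0∞} {x : V} {a : ℝ} {v : V}
    (h : IsQuadMinorant γ f x a v) (w : V) :
    IsQuadMinorant γ f w (a + ⟪v, w - x⟫_ℝ - γ / 2 * ‖w - x‖ ^ 2) (v - γ • (w - x)) := fun z => by
  convert h z using 2
  have hz : z - x = (z - w) + (w - x) := by abel
  rw [hz, norm_add_sq_real, inner_add_right, inner_sub_left, real_inner_smul_left,
    real_inner_comm (z - w) (w - x)]
  ring

theorem sgamma2_mono {γ₁ γ₂ : ℝ} (hγ : 0 < γ₂) (hle : γ₂ ≤ γ₁) (f : V → ℝ≥0∞) (x : V) :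
    Sgamma2 γ₂ f x ≤ Sgamma2 γ₁ f x :=
  EReal.ge_of_forall_gt_iff_ge.1 fun _ ht =>
    let ⟨_, hv⟩ := exists_isQuadMinorant_of_lt_sgamma2 hγ ht
    (hv.mono hle).le_sgamma2 (hγ.trans_le hle)

theorem sgamma2_le {γ : ℝ} (hγ : 0 < γ) (f : V → ℝ≥0∞) (x : V) :
    Sgamma2 γ f x ≤ (f x : EReal) :=
  EReal.ge_of_forall_gt_iff_ge.1 fun t ht => by
    obtain ⟨v, hv⟩ := exists_isQuadMinorant_of_lt_sgamma2 hγ ht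
    simpa using hv x

theorem sgamma2_nonneg {γ : ℝ} (hγ : 0 < γ) (f : V → ℝ≥0∞) (x : V) : 0 ≤ Sgamma2 γ f x := by
  have h : IsQuadMinorant γ f x 0 0 := fun z => by
    refine le_trans ?_ (EReal.coe_ennreal_nonneg (f z))
    norm_cast
    have : 0 ≤ γ / 2 * ‖z - x‖ ^ 2 := by positivity
    simpa using this
  exact_mod_cast h.le_sgamma2 hγ

theorem tendsto_sgamma2_atTop {f : V → ℝ≥0∞} (hf : LowerSemicontinuous f) (x : V) :
    Tendsto (fun γ : ℝ => Sgamma2 γ f x) atTop (𝓝 (f x : EReal)) := by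
  refine tendsto_order.2 ⟨fun s hs => ?_, fun s hs => ?_⟩
  · obtain ⟨t, hst, htf⟩ := EReal.lt_iff_exists_real_btwn.1 hs
    refine Eventually.mono ?_ fun γ h => hst.trans_le h
    rcases lt_or_ge t 0 with ht | ht
    · filter_upwards [eventually_gt_atTop 0] with γ hγ
      exact le_trans (by exact_mod_cast ht.le) (sgamma2_nonneg hγ f x)
    have key : ENNReal.ofReal t < f x := by
      rwa [← EReal.coe_ennreal_lt_coe_ennreal_iff, EReal.coe_ennreal_ofReal, max_eq_left ht]
    obtain ⟨δ, hδ, hball⟩ := Metric.eventually_nhds_iff.1 (hf x _ key)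
    filter_upwards [eventually_gt_atTop 0, eventually_ge_atTop (2 * t / δ ^ 2)] with γ hγ hγδ
    refine IsQuadMinorant.le_sgamma2 (v := 0) hγ fun z => ?_
    rw [inner_zero_left, add_zero]
    rcases lt_or_ge (dist z x) δ with hz | hz
    · have h1 := EReal.coe_ennreal_le_coe_ennreal_iff.2 (hball hz).le
      rw [EReal.coe_ennreal_ofReal, max_eq_left ht] at h1
      refine le_trans (EReal.coe_le_coe_iff.2 ?_) h1
      have : 0 ≤ γ / 2 * ‖z - x‖ ^ 2 := by positivity
      linarith
    · refine le_trans ?_ (EReal.coe_ennreal_nonneg (f z))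
      norm_cast
      rw [dist_eq_norm] at hz
      rw [div_le_iff₀ (by positivity)] at hγδ
      have : γ * δ ^ 2 ≤ γ * ‖z - x‖ ^ 2 := by gcongr
      linarith
  · filter_upwards [eventually_gt_atTop 0] with γ hγ
    exact (sgamma2_le hγ f x).trans_lt hs

/-- The function `S_γ² f + (γ/2)‖·‖²` is convex. -/
theorem sgamma2_convex_combination_le {γ : ℝ} (hγ : 0 < γ) (f : V → ℝ≥0∞) (x y : V) {a b : ℝ}
    (ha : 0 ≤ a) (hb : 0 ≤ b) (hab : a + b = 1) :
    Sgamma2 γ f (a • x + b • y) ≤ (a : EReal) * Sgamma2 γ f x + (b : EReal) * Sgamma2 γ f y +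
      ((γ * (a * b * ‖x - y‖ ^ 2 / 2) : ℝ) : EReal) := by
  refine EReal.ge_of_forall_gt_iff_ge.1 fun t ht => ?_
  obtain ⟨v, hv⟩ := exists_isQuadMinorant_of_lt_sgamma2 hγ ht
  have hx := mul_le_mul_of_nonneg_left ((hv.recenter x).le_sgamma2 hγ) (EReal.coe_nonneg.2 ha)
  have hy := mul_le_mul_of_nonneg_left ((hv.recenter y).le_sgamma2 hγ) (EReal.coe_nonneg.2 hb)
  refine le_trans (le_of_eq ?_) (add_le_add_left (add_le_add hx hy) _)
  norm_cast
  obtain rfl : b = 1 - a := by linarith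
  have h1 : x - (a • x + (1 - a) • y) = (1 - a) • (x - y) := by module
  have h2 : y - (a • x + (1 - a) • y) = (-a) • (x - y) := by module
  rw [h1, h2, norm_smul, norm_smul, inner_smul_right, inner_smul_right, mul_pow, mul_pow,
    Real.norm_eq_abs, Real.norm_eq_abs, sq_abs, sq_abs]
  ring

/-- The pointwise limit of `S_γ² f` as `γ → 0⁺`. -/
def sgamma2Limit (f : V → ℝ≥0∞) (x : V) : EReal :=
  sInf ((fun γ : ℝ => Sgamma2 γ f x) '' Set.Ioi 0)

theorem tendsto_sgamma2_nhdsGT_zero (f : V → ℝ≥0∞) (x : V) :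
    Tendsto (fun γ : ℝ => Sgamma2 γ f x) (𝓝[>] 0) (𝓝 (sgamma2Limit f x)) :=
  MonotoneOn.tendsto_nhdsGT (fun _ h₁ _ _ hle => sgamma2_mono h₁ hle f x) (OrderBot.bddBelow _)

theorem sgamma2Limit_nonneg (f : V → ℝ≥0∞) (x : V) : 0 ≤ sgamma2Limit f x := by
  refine le_sInf ?_
  rintro _ ⟨γ, hγ, rfl⟩
  exact sgamma2_nonneg hγ f x

theorem sgamma2Limit_le (f : V → ℝ≥0∞) (x : V) : sgamma2Limit f x ≤ (f x : EReal) :=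
  (sInf_le (Set.mem_image_of_mem _ (Set.mem_Ioi.2 one_pos))).trans (sgamma2_le one_pos f x)

theorem eConvexOn_sgamma2Limit (f : V → ℝ≥0∞) : EConvexOn (sgamma2Limit f) := by
  intro x y a b ha hb hab
  have hmul : ∀ (w : V) (c : ℝ), Tendsto (fun γ : ℝ => (c : EReal) * Sgamma2 γ f w)
      (𝓝[>] 0) (𝓝 ((c : EReal) * sgamma2Limit f w)) := fun w c =>
    EReal.Tendsto.const_mul (tendsto_sgamma2_nhdsGT_zero f w) (.inl (EReal.coe_ne_bot c))
      (.inl (EReal.coe_ne_top c))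
  have hbot : ∀ (w : V) {c : ℝ}, 0 ≤ c → (c : EReal) * sgamma2Limit f w ≠ ⊥ := fun w c hc =>
    (EReal.bot_lt_zero.trans_le
      (mul_nonneg (by exact_mod_cast hc) (sgamma2Limit_nonneg f w))).ne'
  have herr : Tendsto (fun γ : ℝ => ((γ * (a * b * ‖x - y‖ ^ 2 / 2) : ℝ) : EReal))
      (𝓝[>] 0) (𝓝 ((0 : ℝ) : EReal)) := by
    refine EReal.tendsto_coe.2 (tendsto_nhdsWithin_of_tendsto_nhds ?_)
    exact (continuous_mul_const (a * b * ‖x - y‖ ^ 2 / 2)).tendsto' 0 0 (zero_mul _)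
  have hsum := (EReal.continuousAt_add (p := (_, _)) (.inr (hbot y hb))
    (.inl (hbot x ha))).tendsto.comp ((hmul x a).prodMk_nhds (hmul y b))
  have htot := (EReal.continuousAt_add (p := (_, ((0 : ℝ) : EReal))) (.inr (by simp))
    (.inr (by simp))).tendsto.comp (hsum.prodMk_nhds herr)
  simp only [EReal.coe_zero, add_zero] at htot
  refine le_of_tendsto_of_tendsto (tendsto_sgamma2_nhdsGT_zero f _) htot ?_
  filter_upwards [self_mem_nhdsWithin] with γ hγ
  exact sgamma2_convex_combination_le hγ f x y ha hb hab

/-- A nonnegative function above a l.s.c. convex function `h` has affine minorants whose value at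
`x` is any given nonnegative real below `h x`. -/
theorem exists_affine_minorant [CompleteSpace V] {f : V → ℝ≥0∞} {h : V → EReal}
    (hlsc : LowerSemicontinuous h) (hconv : EConvexOn h) (hle : ∀ x, h x ≤ (f x : EReal))
    {x : V} {t : ℝ} (ht : 0 ≤ t) (hx : (t : EReal) < h x) :
    ∃ v : V, ∀ z, ((t + ⟪v, z - x⟫_ℝ : ℝ) : EReal) ≤ (f z : EReal) := by
  set E : Set (V × ℝ) := {p | h p.1 ≤ (p.2 : EReal)}
  have hclosed : IsClosed E := hlsc.isClosed_epigraph.preimage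
    (continuous_fst.prodMk (continuous_coe_real_ereal.comp continuous_snd))
  have hconvex : Convex ℝ E := by
    intro p hp q hq a b ha hb hab
    refine (hconv p.1 q.1 a b ha hb hab).trans ?_
    refine (add_le_add (mul_le_mul_of_nonneg_left hp (EReal.coe_nonneg.2 ha))
      (mul_le_mul_of_nonneg_left hq (EReal.coe_nonneg.2 hb))).trans (le_of_eq ?_)
    simp
  obtain ⟨φ, u, hφ, hu⟩ := geometric_hahn_banach_closed_point hconvex hclosed
    (show (x, t) ∉ E from not_le.2 hx)
  set w : V := (InnerProductSpace.toDual ℝ V).symm (φ.comp (ContinuousLinearMap.inl ℝ V ℝ)) with hw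
  set s : ℝ := φ (0, 1) with hs
  have hφ_eq : ∀ (z : V) (r : ℝ), φ (z, r) = ⟪w, z⟫_ℝ + r * s := fun z r => by
    have h1 : ⟪w, z⟫_ℝ = φ (z, 0) := by simp [hw]
    rw [h1, hs, ← smul_eq_mul, ← map_smul, ← map_add]
    simp
  have hdom : ∀ z, f z ≠ ⊤ → ∀ r, (f z).toReal ≤ r → ⟪w, z⟫_ℝ + r * s < u := fun z hz r hr => by
    rw [← hφ_eq]
    refine hφ _ ((hle z).trans ?_)
    rw [← EReal.coe_ennreal_toReal hz]
    exact_mod_cast hr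
  rw [hφ_eq] at hu
  suffices H : ∃ v : V, ∀ z, f z ≠ ⊤ → t + ⟪v, z - x⟫_ℝ ≤ (f z).toReal by
    obtain ⟨v, hv⟩ := H
    refine ⟨v, fun z => ?_⟩
    by_cases hz : f z = ⊤
    · simp [hz]
    · rw [← EReal.coe_ennreal_toReal hz]
      exact_mod_cast hv z hz
  rcases lt_trichotomy s 0 with hs0 | hs0 | hs0
  · refine ⟨(-s)⁻¹ • w, fun z hz => ?_⟩
    have h1 := hdom z hz _ le_rfl
    rw [real_inner_smul_left, inner_sub_right]
    have hs' : 0 < -s := by linarith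
    rw [← le_sub_iff_add_le', inv_mul_le_iff₀ hs']
    linarith
  · rw [hs0, mul_zero, add_zero] at hu
    have hd : 0 < ⟪w, x⟫_ℝ - u := by linarith
    refine ⟨(t / (⟪w, x⟫_ℝ - u)) • w, fun z hz => ?_⟩
    have h1 := hdom z hz _ le_rfl
    rw [hs0, mul_zero, add_zero] at h1
    refine le_trans ?_ ENNReal.toReal_nonneg
    rw [real_inner_smul_left, inner_sub_right]
    have h2 : t / (⟪w, x⟫_ℝ - u) * (⟪w, z⟫_ℝ - ⟪w, x⟫_ℝ) ≤
        t / (⟪w, x⟫_ℝ - u) * (-(⟪w, x⟫_ℝ - u)) := by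
      gcongr
      linarith
    rw [mul_neg, div_mul_cancel₀ _ hd.ne'] at h2
    linarith
  · refine ⟨0, fun z hz => ?_⟩
    have h1 := hdom z hz (max (f z).toReal ((u - ⟪w, z⟫_ℝ) / s)) (le_max_left _ _)
    have h2 : (u - ⟪w, z⟫_ℝ) / s * s ≤ max (f z).toReal ((u - ⟪w, z⟫_ℝ) / s) * s := by
      gcongr
      exact le_max_right _ _
    rw [div_mul_cancel₀ _ hs0.ne'] at h2
    linarith

theorem le_sgamma2_of_eConvexOn [CompleteSpace V] {f : V → ℝ≥0∞} {h : V → EReal}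
    (hlsc : LowerSemicontinuous h) (hconv : EConvexOn h) (hle : ∀ x, h x ≤ (f x : EReal))
    {γ : ℝ} (hγ : 0 < γ) (x : V) : h x ≤ Sgamma2 γ f x := by
  refine EReal.ge_of_forall_gt_iff_ge.1 fun t hx => ?_
  rcases lt_or_ge t 0 with ht | ht
  · exact le_trans (by exact_mod_cast ht.le) (sgamma2_nonneg hγ f x)
  obtain ⟨v, hv⟩ := exists_affine_minorant hlsc hconv hle ht hx
  refine IsQuadMinorant.le_sgamma2 (v := v) hγ fun z => ?_
  refine le_trans (EReal.coe_le_coe_iff.2 ?_) (hv z)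
  have : 0 ≤ γ / 2 * ‖z - x‖ ^ 2 := by positivity
  linarith

end QuadraticMinorants

/-- For `f : V → [0,∞]` l.s.c.: (i) `γ ↦ S_γ²(f)(x)` is non-decreasing on
`(0,∞)`; (ii) `S_γ²(f)(x) → f(x)` as `γ → ∞`; (iii) the pointwise limit `g` as `γ → 0⁺` exists,
is convex, and `CE(f) ≤ g ≤ f` (i.e. `g ≤ f` and `g` dominates every l.s.c. convex function
below `f`). -/
theorem statement2 {V : Type*} [NormedAddCommGroup V] [InnerProductSpace ℝ V]
    [CompleteSpace V] [TopologicalSpace.SeparableSpace V]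
    (f : V → ℝ≥0∞) (hlsc : LowerSemicontinuous f) :
    (∀ x : V, ∀ γ₁ γ₂ : ℝ, 0 < γ₂ → γ₂ ≤ γ₁ → Sgamma2 γ₂ f x ≤ Sgamma2 γ₁ f x) ∧
    (∀ x : V, Tendsto (fun γ : ℝ => Sgamma2 γ f x) atTop (nhds (f x : EReal))) ∧
    (∃ g : V → EReal,
      (∀ x : V, Tendsto (fun γ : ℝ => Sgamma2 γ f x) (nhdsWithin 0 (Set.Ioi 0)) (nhds (g x))) ∧
      EConvexOn g ∧ (∀ x : V, g x ≤ (f x : EReal)) ∧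
      (∀ h : V → EReal, LowerSemicontinuous h → EConvexOn h →
        (∀ x : V, h x ≤ (f x : EReal)) → ∀ x : V, h x ≤ g x)) := by
  refine ⟨fun x _ _ hγ hle => sgamma2_mono hγ hle f x, tendsto_sgamma2_atTop hlsc, sgamma2Limit f,
    tendsto_sgamma2_nhdsGT_zero f, eConvexOn_sgamma2Limit f, sgamma2Limit_le f,
    fun h hh hconv hle x => le_sInf ?_⟩
  rintro _ ⟨γ, hγ, rfl⟩
  exact le_sgamma2_of_eConvexOn hh hconv hle hγ x
end
end

section
/- Let g : V → (−∞,+∞] be a weakly lower semicontinuous function on a separable real Hilbert space V, not identically +∞, such that its biconjugate g** is proper and coercive (all sublevel sets of g** are bounded). Then for every extremal point x of g** — that is, every x ∈ dom(g**) such that g** is not affine on any relatively open segment containing x — one has g(x) = g**(x). Equivalently, the epigraph of the function equal to g** at extremal points of g** and +∞ elsewhere is contained in the epigraph of g. -/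
open scoped InnerProductSpace RealInnerProductSpace ENNReal Topology
open Filter

noncomputable section

/-- The Legendre transform (Fenchel conjugate) of an extended-real-valued function. -/
def legendre {V : Type*} [NormedAddCommGroup V] [InnerProductSpace ℝ V]
    (g : V → EReal) (y : V) : EReal :=
  ⨆ x : V, (((⟪x, y⟫_ℝ : ℝ) : EReal) - g x)

section Slices

variable {E : Type*} [AddCommGroup E] [Module ℝ E] [TopologicalSpace E]
  [IsTopologicalAddGroup E] [ContinuousSMul ℝ E]

/-- The convex join of two compact sets is compact. -/
theorem isCompact_convexJoin {s t : Set E} (hs : IsCompact s) (ht : IsCompact t) :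
    IsCompact (convexJoin ℝ s t) := by
  have h : convexJoin ℝ s t =
      (fun q : ℝ × E × E => (1 - q.1) • q.2.1 + q.1 • q.2.2) ''
        (Set.Icc (0 : ℝ) 1 ×ˢ s ×ˢ t) := by
    ext z
    simp only [mem_convexJoin, segment_eq_image, Set.mem_image, Set.mem_prod, Prod.exists]
    constructor
    · rintro ⟨a, ha, b, hb, θ, hθ, rfl⟩
      exact ⟨θ, a, b, ⟨hθ, ha, hb⟩, rfl⟩
    · rintro ⟨θ, a, b, ⟨hθ, ha, hb⟩, rfl⟩
      exact ⟨a, ha, b, hb, θ, hθ, rfl⟩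
  rw [h]
  exact (isCompact_Icc.prod (hs.prod ht)).image (by fun_prop)

variable [T2Space E] [LocallyConvexSpace ℝ E]

/-- A form of Milman's theorem: an extreme point `p` of a compact convex set `K` outside a compact
subset `S` of `K` is outside some compact convex subset of `K` containing `S`. -/
theorem exists_isCompact_convex_of_mem_extremePoints {K S : Set E} (hK : IsCompact K)
    (hKc : Convex ℝ K) (hS : IsCompact S) (hSK : S ⊆ K) {p : E}
    (hp : p ∈ K.extremePoints ℝ) (hpS : p ∉ S) :
    ∃ T, IsCompact T ∧ Convex ℝ T ∧ S ⊆ T ∧ p ∉ T := by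
  suffices h : ∃ T, IsCompact T ∧ Convex ℝ T ∧ T ⊆ K ∧ p ∉ T ∧ S ∩ K ⊆ T by
    obtain ⟨T, hT, hTc, -, hpT, hST⟩ := h
    exact ⟨T, hT, hTc, fun z hz => hST ⟨hz, hSK hz⟩, hpT⟩
  refine hS.induction_on
    (p := fun S => ∃ T, IsCompact T ∧ Convex ℝ T ∧ T ⊆ K ∧ p ∉ T ∧ S ∩ K ⊆ T) ?_ ?_ ?_ ?_
  · exact ⟨∅, isCompact_empty, convex_empty, by simp, by simp, by simp⟩
  · rintro s t hst ⟨T, hT, hTc, hTK, hpT, htT⟩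
    exact ⟨T, hT, hTc, hTK, hpT, (Set.inter_subset_inter_left K hst).trans htT⟩
  · rintro s t ⟨T, hT, hTc, hTK, hpT, hsT⟩ ⟨T', hT', hTc', hTK', hpT', htT'⟩
    rw [Set.union_inter_distrib_right]
    obtain rfl | hne := T.eq_empty_or_nonempty
    · exact ⟨T', hT', hTc', hTK', hpT',
        Set.union_subset (hsT.trans (Set.empty_subset _)) htT'⟩
    obtain rfl | hne' := T'.eq_empty_or_nonempty
    · exact ⟨T, hT, hTc, hTK, hpT, Set.union_subset hsT (htT'.trans (Set.empty_subset _))⟩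
    refine ⟨convexJoin ℝ T T', isCompact_convexJoin hT hT', hTc.convexJoin hTc',
      convexJoin_subset hTK hTK' hKc, fun hpJ => ?_,
      Set.union_subset (hsT.trans (subset_convexJoin_left hne'))
        (htT'.trans (subset_convexJoin_right hne))⟩
    obtain ⟨a, ha, b, hb, hab⟩ := mem_convexJoin.1 hpJ
    rcases (mem_extremePoints_iff_forall_segment.1 hp).2 a (hTK ha) b (hTK' hb) hab with rfl | rfl
    · exact hpT ha
    · exact hpT' hb
  · intro z hz
    obtain ⟨l, hl⟩ := geometric_hahn_banach_point_point (ne_of_mem_of_not_mem hz hpS)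
    obtain ⟨c, hzc, hcp⟩ := exists_between hl
    have hclosed : IsClosed {w | l w ≤ c} := isClosed_le l.continuous continuous_const
    refine ⟨{w | l w ≤ c}, mem_nhdsWithin_of_mem_nhds ?_, K ∩ {w | l w ≤ c},
      hK.inter_right hclosed, hKc.inter (convex_halfSpace_le l.toLinearMap.isLinear c),
      Set.inter_subset_left, fun h => hcp.not_ge h.2, fun w hw => ⟨hw.2, hw.1⟩⟩
    filter_upwards [(isOpen_lt l.continuous continuous_const).mem_nhds hzc] with w hw
    exact le_of_lt hw

/-- If the part of a convex set `K` where a continuous functional `τ` is at most `r` is compact,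
then every neighbourhood of an extreme point `p` of `K` on which `τ < r` contains an open slice
of `K` around `p`. -/
theorem exists_slice_subset_of_mem_extremePoints {K U : Set E} (hKc : Convex ℝ K)
    (τ : E →L[ℝ] ℝ) {r : ℝ} (hcomp : IsCompact (K ∩ {q | τ q ≤ r})) (hU : IsOpen U)
    (hUr : ∀ q ∈ U, τ q < r) {p : E} (hp : p ∈ K.extremePoints ℝ) (hpU : p ∈ U) :
    ∃ (l : E →L[ℝ] ℝ) (d : ℝ), d < l p ∧ ∀ q ∈ K, d < l q → q ∈ U := by
  have hpr : p ∈ K ∩ {q | τ q ≤ r} := ⟨hp.1, (hUr p hpU).le⟩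
  obtain ⟨T, hT, hTc, hST, hpT⟩ := exists_isCompact_convex_of_mem_extremePoints hcomp
    (hKc.inter (convex_halfSpace_le τ.toLinearMap.isLinear r)) (hcomp.diff hU) Set.sdiff_subset
    (inter_extremePoints_subset_extremePoints_of_subset Set.inter_subset_left ⟨hpr, hp⟩)
    (fun h => h.2 hpU)
  obtain ⟨l, d, hl, hd⟩ := geometric_hahn_banach_closed_point hTc hT.isClosed hpT
  have key : ∀ q ∈ K, τ q ≤ r → d < l q → q ∈ U := fun q hq hqr hdq => by
    by_contra hqU
    exact (hl q (hST ⟨⟨hq, hqr⟩, hqU⟩)).not_gt hdq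
  refine ⟨l, d, hd, fun q hq hdq => ?_⟩
  rcases le_or_gt (τ q) r with hqr | hqr
  · exact key q hq hqr hdq
  exfalso
  have hpr' := hUr p hpU
  have hpos : 0 < τ q - τ p := by linarith
  set θ : ℝ := (r - τ p) / (τ q - τ p) with hθ
  have hθ0 : 0 < θ := div_pos (by linarith) hpos
  have hθ1 : θ < 1 := (div_lt_one hpos).2 (by linarith)
  have hθr : θ * (τ q - τ p) = r - τ p := div_mul_cancel₀ _ hpos.ne'
  have hτ : τ ((1 - θ) • p + θ • q) = r := by
    simp only [map_add, map_smul, smul_eq_mul]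
    linarith
  have hmem := key ((1 - θ) • p + θ • q)
    (hKc hp.1 hq (by linarith) hθ0.le (by ring)) hτ.le (by
      simp only [map_add, map_smul, smul_eq_mul]
      nlinarith)
  exact (hUr _ hmem).ne hτ

end Slices

section Biconjugate

variable {V : Type*} [NormedAddCommGroup V] [InnerProductSpace ℝ V]

theorem EReal.coe_sub_le_coe_iff (a t : ℝ) (b : EReal) :
    (a : EReal) - b ≤ t ↔ ((a - t : ℝ) : EReal) ≤ b := by
  induction b with
  | bot => simp [-EReal.coe_sub]
  | top => simp
  | coe b =>
    norm_cast
    constructor <;> intro h <;> linarith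

theorem legendre_le_coe_iff (h : V → EReal) (x : V) (t : ℝ) :
    legendre h x ≤ t ↔ ∀ y, ((⟪y, x⟫_ℝ - t : ℝ) : EReal) ≤ h y := by
  simp only [legendre, iSup_le_iff, EReal.coe_sub_le_coe_iff]

/-- The biconjugate is the supremum of the continuous affine minorants. -/
theorem biconjugate_le_coe_iff (g : V → EReal) (x : V) (t : ℝ) :
    legendre (legendre g) x ≤ t ↔
      ∀ (y : V) (r : ℝ), (∀ z, ((⟪z, y⟫_ℝ - r : ℝ) : EReal) ≤ g z) → ⟪y, x⟫_ℝ - r ≤ t := by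
  rw [legendre_le_coe_iff]
  refine forall_congr' fun y => ?_
  simp only [← legendre_le_coe_iff]
  constructor
  · intro h r hr
    have := EReal.coe_le_coe_iff.1 (h.trans hr)
    linarith
  · intro h
    refine EReal.le_of_forall_lt_iff_le.1 fun r hr => EReal.coe_le_coe_iff.2 ?_
    linarith [h r hr.le]

theorem biconjugate_le (g : V → EReal) (x : V) : legendre (legendre g) x ≤ g x := by
  refine EReal.le_of_forall_lt_iff_le.1 fun t ht => ?_
  refine (biconjugate_le_coe_iff g x t).2 fun y r h => ?_
  rw [real_inner_comm]
  exact EReal.coe_le_coe_iff.1 ((h x).trans ht.le)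

theorem biconjugate_convex (g : V → EReal) {x₁ x₂ : V} {t₁ t₂ a b : ℝ}
    (h₁ : legendre (legendre g) x₁ ≤ t₁) (h₂ : legendre (legendre g) x₂ ≤ t₂)
    (ha : 0 ≤ a) (hb : 0 ≤ b) (hab : a + b = 1) :
    legendre (legendre g) (a • x₁ + b • x₂) ≤ ((a * t₁ + b * t₂ : ℝ) : EReal) := by
  rw [biconjugate_le_coe_iff] at *
  intro y r h
  have e₁ := mul_le_mul_of_nonneg_left (h₁ y r h) ha
  have e₂ := mul_le_mul_of_nonneg_left (h₂ y r h) hb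
  rw [inner_add_right, real_inner_smul_right, real_inner_smul_right]
  have : r = a * r + b * r := by rw [← add_mul, hab, one_mul]
  linarith

theorem exists_affine_minorant_s11 {g : V → EReal} {x : V} (hx : legendre (legendre g) x ≠ ⊥) :
    ∃ (y : V) (r : ℝ), ∀ z, ((⟪z, y⟫_ℝ - r : ℝ) : EReal) ≤ g z := by
  by_contra! hno
  refine hx (EReal.eq_bot_iff_forall_lt _ |>.2 fun t => ?_)
  refine lt_of_le_of_lt ((biconjugate_le_coe_iff g x (t - 1)).2 fun y r h => ?_)
    (EReal.coe_lt_coe_iff.2 (sub_one_lt t))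
  obtain ⟨z, hz⟩ := hno y r
  exact absurd (h z) hz.not_ge

/-- A closed half-space of `V × ℝ` containing the epigraph of `g` contains that of `g**`. -/
theorem biconjugate_halfSpace {g : V → EReal} (hg : ∃ x, g x ≠ ⊤) {y₀ : V} {r₀ : ℝ}
    (hmin : ∀ z, ((⟪z, y₀⟫_ℝ - r₀ : ℝ) : EReal) ≤ g z) {v : V} {s d : ℝ}
    (hepi : ∀ (z : V) (t : ℝ), g z ≤ t → ⟪v, z⟫_ℝ + s * t ≤ d) {x : V} {t : ℝ}
    (hx : legendre (legendre g) x ≤ t) : ⟪v, x⟫_ℝ + s * t ≤ d := by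
  have hnebot : ∀ z, g z ≠ ⊥ := fun z hz =>
    EReal.coe_ne_bot _ (le_bot_iff.1 (hz ▸ hmin z))
  have hs : s ≤ 0 := by
    obtain ⟨z, hz⟩ := hg
    have ht₀ := EReal.coe_toReal hz (hnebot z)
    set t₀ := (g z).toReal
    by_contra! hs
    set M := |d - ⟪v, z⟫_ℝ - s * t₀| / s + 1 with hM
    have hM0 : 0 ≤ M := by positivity
    have h := hepi z (t₀ + M) (by
      rw [← ht₀]
      exact EReal.coe_le_coe_iff.2 (by linarith))
    have hsM : s * M = |d - ⟪v, z⟫_ℝ - s * t₀| + s := by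
      rw [hM]
      field_simp
    linarith [le_abs_self (d - ⟪v, z⟫_ℝ - s * t₀)]
  by_contra! hlt
  set δ := ⟪v, x⟫_ℝ + s * t - d with hδ
  have hδ0 : 0 < δ := by linarith
  set μ := |t - ⟪y₀, x⟫_ℝ + r₀| / δ + 1 with hμ
  have hμ0 : 0 ≤ μ := by positivity
  have hμδ : μ * δ = |t - ⟪y₀, x⟫_ℝ + r₀| + δ := by
    rw [hμ]
    field_simp
  have hκ : 0 < 1 - μ * s := by nlinarith
  have hminor : ∀ z, ((⟪z, (1 - μ * s)⁻¹ • (y₀ + μ • v)⟫_ℝ - (1 - μ * s)⁻¹ * (r₀ + μ * d) : ℝ) :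
      EReal) ≤ g z := by
    intro z
    by_cases hz : g z = ⊤
    · simp [hz]
    have htz := EReal.coe_toReal hz (hnebot z)
    set tz := (g z).toReal
    have h₁ := hepi z tz htz.ge
    have h₂ : ⟪z, y₀⟫_ℝ - r₀ ≤ tz := EReal.coe_le_coe_iff.1 (htz ▸ hmin z)
    rw [← htz, EReal.coe_le_coe_iff, real_inner_smul_right, inner_add_right,
      real_inner_smul_right, ← mul_sub, inv_mul_le_iff₀ hκ, real_inner_comm v z]
    nlinarith [mul_le_mul_of_nonneg_left h₁ hμ0]
  have h := (biconjugate_le_coe_iff g x t).1 hx _ _ hminor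
  rw [real_inner_smul_left, inner_add_left, real_inner_smul_left, ← mul_sub,
    inv_mul_le_iff₀ hκ] at h
  have hexp : μ * δ = μ * ⟪v, x⟫_ℝ + μ * s * t - μ * d := by
    rw [hδ]
    ring
  linarith [le_abs_self (t - ⟪y₀, x⟫_ℝ + r₀)]

/-- If `g**` is not affine around `x` in any direction, then `(x, g**(x))` is an extreme point of
the epigraph of `g**`. -/
theorem biconjugate_mem_extremePoints {g : V → EReal} {x : V} {m : ℝ}
    (hm : legendre (legendre g) x = m)
    (hext : ¬ ∃ (ν : V) (a b t₀ : ℝ), ‖ν‖ = 1 ∧ 0 < t₀ ∧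
      ∀ t ∈ Set.Ioo (-t₀) t₀,
        legendre (legendre g) (x + t • ν) = ((a * t + b : ℝ) : EReal)) :
    (x, m) ∈ {q : V × ℝ | legendre (legendre g) q.1 ≤ q.2}.extremePoints ℝ := by
  refine mem_extremePoints_iff_left.2 ⟨hm.le, ?_⟩
  rintro ⟨u, t₁⟩ h₁ ⟨w, t₂⟩ h₂ ⟨a, b, ha, hb, hab, hp⟩
  simp only [Set.mem_ofPred_eq] at h₁ h₂
  simp only [Prod.smul_mk, Prod.mk_add_mk, Prod.mk.injEq, smul_eq_mul] at hp
  obtain ⟨hx, htm⟩ := hp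
  by_cases huw : u = w
  · subst huw
    rw [← add_smul, hab, one_smul] at hx
    subst hx
    rw [hm, EReal.coe_le_coe_iff] at h₁ h₂
    have ha' : a = 1 - b := by linarith
    have : t₁ = m := by
      subst ha'
      nlinarith
    rw [this]
  exfalso
  have hN : 0 < ‖w - u‖ := norm_pos_iff.2 (sub_ne_zero.2 (Ne.symm huw))
  set N := ‖w - u‖ with hNdef
  have hup : ∀ t ∈ Set.Ioo (-(N * min a b)) (N * min a b),
      legendre (legendre g) (x + t • (N⁻¹ • (w - u))) ≤
        (((t₂ - t₁) / N * t + m : ℝ) : EReal) := by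
    rintro t ⟨hlo, hhi⟩
    have hβ₁ : -min a b < t / N := by
      rw [lt_div_iff₀ hN]
      linarith
    have hβ₂ : t / N < min a b := by
      rw [div_lt_iff₀ hN]
      linarith
    have h := biconjugate_convex g h₁ h₂ (a := a - t / N) (b := b + t / N)
      (by linarith [min_le_left a b]) (by linarith [min_le_right a b]) (by linarith)
    have e₁ : (a - t / N) • u + (b + t / N) • w = x + t • (N⁻¹ • (w - u)) := by
      rw [← hx]
      module
    have e₂ : (a - t / N) * t₁ + (b + t / N) * t₂ = (t₂ - t₁) / N * t + m := by
      rw [← htm]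
      ring
    rwa [e₁, e₂] at h
  refine hext ⟨N⁻¹ • (w - u), (t₂ - t₁) / N, m, N * min a b, ?_, ?_, fun t ht => ?_⟩
  · rw [norm_smul, norm_inv, norm_norm, ← hNdef, inv_mul_cancel₀ hN.ne']
  · exact mul_pos hN (lt_min ha hb)
  refine le_antisymm (hup t ht) (le_of_not_gt fun hlt => ?_)
  obtain ⟨c, hc₁, hc₂⟩ := EReal.lt_iff_exists_real_btwn.1 hlt
  have h := biconjugate_convex g hc₁.le (hup (-t) ⟨by linarith [ht.2], by linarith [ht.1]⟩)
    (a := 1 / 2) (b := 1 / 2) (by norm_num) (by norm_num) (by norm_num)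
  have e : (1 / 2 : ℝ) • (x + t • (N⁻¹ • (w - u))) + (1 / 2 : ℝ) • (x + (-t) • (N⁻¹ • (w - u))) =
      x := by module
  rw [e, hm, EReal.coe_le_coe_iff] at h
  have := EReal.coe_lt_coe_iff.1 hc₂
  linarith

end Biconjugate

section Weak

variable {V : Type*} [NormedAddCommGroup V] [InnerProductSpace ℝ V]

instance : LocallyConvexSpace ℝ (WeakSpace ℝ V) :=
  inferInstanceAs (LocallyConvexSpace ℝ (WeakBilin (topDualPairing ℝ V).flip))

theorem continuous_inner_weakSpace (y : V) :
    Continuous fun w : WeakSpace ℝ V => ⟪y, (toWeakSpace ℝ V).symm w⟫_ℝ :=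
  WeakBilin.eval_continuous (topDualPairing ℝ V).flip (innerSL ℝ y)

variable [CompleteSpace V]

/-- Bounded subsets of a Hilbert space are weakly relatively compact. -/
theorem isCompact_closure_weakSpace {S : Set V} (hS : Bornology.IsBounded S) :
    IsCompact (closure ((toWeakSpace ℝ V).symm ⁻¹' S)) := by
  refine NormedSpace.isCompact_closure_of_isBounded ℝ V _ hS fun Φ _ => ?_
  let ψ : StrongDual ℝ V := (WeakDual.toStrongDual Φ).comp
    (isBoundedBilinearMap_inner (𝕜 := ℝ) (E := V)).toContinuousLinearMap
  refine ⟨toWeakSpace ℝ V ((InnerProductSpace.toDual ℝ V).symm ψ), DFunLike.ext _ _ fun φ => ?_⟩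
  obtain ⟨w, rfl⟩ := (InnerProductSpace.toDual ℝ V).surjective φ
  have h : ⟪w, (InnerProductSpace.toDual ℝ V).symm ψ⟫_ℝ = ψ w := by
    rw [real_inner_comm, InnerProductSpace.toDual_symm_apply]
  exact h

/-- Sublevel parts of the epigraph of a coercive biconjugate are weakly compact. -/
theorem isCompact_epigraph_biconjugate {g : V → EReal} {y₀ : V} {r₀ : ℝ}
    (hmin : ∀ z, ((⟪z, y₀⟫_ℝ - r₀ : ℝ) : EReal) ≤ g z) {c : ℝ}
    (hbdd : Bornology.IsBounded {x : V | legendre (legendre g) x ≤ (c : EReal)}) :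
    IsCompact ({q : WeakSpace ℝ V × ℝ |
      legendre (legendre g) ((toWeakSpace ℝ V).symm q.1) ≤ q.2} ∩ {q | q.2 ≤ c}) := by
  obtain ⟨R, hR⟩ := hbdd.exists_norm_le
  refine ((isCompact_closure_weakSpace hbdd).prod
    (isCompact_Icc (a := -(‖y₀‖ * R) - r₀) (b := c))).of_isClosed_subset ?_ ?_
  · refine IsClosed.inter ?_ (isClosed_le continuous_snd continuous_const)
    simp only [biconjugate_le_coe_iff, Set.ofPred_forall]
    refine isClosed_iInter fun y => isClosed_iInter fun r => isClosed_iInter fun _ =>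
      isClosed_le (((continuous_inner_weakSpace y).comp continuous_fst).sub continuous_const)
        continuous_snd
  · rintro ⟨w, t⟩ ⟨hw, ht⟩
    simp only [Set.mem_ofPred_eq] at hw ht
    have hwc := hw.trans (EReal.coe_le_coe_iff.2 ht)
    refine ⟨subset_closure hwc, ?_, ht⟩
    have h₁ := (biconjugate_le_coe_iff g _ t).1 hw y₀ r₀ hmin
    have h₂ := (abs_le.1 (abs_real_inner_le_norm y₀ ((toWeakSpace ℝ V).symm w))).1
    have h₃ := mul_le_mul_of_nonneg_left (hR _ hwc) (norm_nonneg y₀)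
    linarith

end Weak

/-- Let `g` be weakly l.s.c., not identically `+∞`, never `-∞`, with proper
coercive biconjugate `g**`. Then every extremal point `x` of `g**` (a point of the domain of
`g**` at which `g**` is not affine on any relatively open segment containing `x`) satisfies
`g(x) = g**(x)`. -/
theorem statement11 {V : Type*} [NormedAddCommGroup V] [InnerProductSpace ℝ V]
    [CompleteSpace V] [TopologicalSpace.SeparableSpace V]
    (g : V → EReal)
    (hwlsc : LowerSemicontinuous (α := WeakSpace ℝ V) g)
    (hnebot : ∀ x, g x ≠ ⊥) (hproper : ∃ x, g x ≠ ⊤)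
    (hss_nebot : ∀ x, legendre (legendre g) x ≠ ⊥)
    (hss_proper : ∃ x, legendre (legendre g) x ≠ ⊤)
    (hcoercive : ∀ r : ℝ, Bornology.IsBounded {x : V | legendre (legendre g) x ≤ (r : EReal)})
    (x : V)
    (hdom : legendre (legendre g) x ≠ ⊤)
    (hext : ¬ ∃ (ν : V) (a b t₀ : ℝ), ‖ν‖ = 1 ∧ 0 < t₀ ∧
      ∀ t ∈ Set.Ioo (-t₀) t₀,
        legendre (legendre g) (x + t • ν) = ((a * t + b : ℝ) : EReal)) :
    g x = legendre (legendre g) x := by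
  have hle := biconjugate_le g x
  by_contra hne
  have hlt : legendre (legendre g) x < g x := lt_of_le_of_ne hle (Ne.symm hne)
  have hm := (EReal.coe_toReal hdom (hss_nebot x)).symm
  set m := (legendre (legendre g) x).toReal
  obtain ⟨c, hmc, hcg⟩ := EReal.lt_iff_exists_real_btwn.1 hlt
  rw [hm, EReal.coe_lt_coe_iff] at hmc
  obtain ⟨y₀, r₀, hmin⟩ := exists_affine_minorant_s11 (hss_nebot x)
  let e := toWeakSpace ℝ V
  let K : Set (WeakSpace ℝ V × ℝ) := {q | legendre (legendre g) (e.symm q.1) ≤ q.2}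
  let U : Set (WeakSpace ℝ V × ℝ) := {w : WeakSpace ℝ V | (c : EReal) < g (e.symm w)} ×ˢ Set.Iio c
  have hKc : Convex ℝ K := by
    rintro ⟨w₁, t₁⟩ h₁ ⟨w₂, t₂⟩ h₂ a b ha hb hab
    exact biconjugate_convex g h₁ h₂ ha hb hab
  have hU : IsOpen U := (hwlsc.isOpen_preimage (c : EReal)).prod isOpen_Iio
  have hp : (e x, m) ∈ K.extremePoints ℝ := by
    have h := biconjugate_mem_extremePoints hm hext
    exact h
  obtain ⟨l, d, hd, hl⟩ := exists_slice_subset_of_mem_extremePoints hKc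
    (ContinuousLinearMap.snd ℝ (WeakSpace ℝ V) ℝ)
    (isCompact_epigraph_biconjugate hmin (hcoercive c)) hU (fun q hq => hq.2) hp ⟨hcg, hmc⟩
  let φ : StrongDual ℝ V :=
    l.comp ((ContinuousLinearMap.inl ℝ (WeakSpace ℝ V) ℝ).comp (toWeakSpaceCLM ℝ V))
  let v : V := (InnerProductSpace.toDual ℝ V).symm φ
  have hlv : ∀ (z : V) (t : ℝ), l (e z, t) = ⟪v, z⟫_ℝ + l (0, 1) * t := fun z t => by
    have hv : ⟪v, z⟫_ℝ = l (e z, 0) := InnerProductSpace.toDual_symm_apply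
    have hsum : (e z, t) = (e z, (0 : ℝ)) + t • ((0 : WeakSpace ℝ V), (1 : ℝ)) := by simp
    rw [hv, hsum, map_add, map_smul, smul_eq_mul, mul_comm]
  have hhalf := biconjugate_halfSpace hproper hmin (v := v) (s := l (0, 1)) (d := d)
    (fun z t hzt => by
      rw [← hlv]
      by_contra! hdl
      obtain ⟨hcz, htc⟩ := hl (e z, t) ((biconjugate_le g z).trans hzt) hdl
      exact (hcz.trans_le hzt).not_gt (EReal.coe_lt_coe_iff.2 htc)) hm.le
  rw [← hlv] at hhalf
  exact hhalf.not_gt hd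
end
end
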